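/- Let Γ be a connected non-bipartite graph. Assume there is a triangle C of Γ such that either V ∖ N[C] has at most one vertex, or the induced subgraph of the complement graph Γ^c on V ∖ N[C] is disconnected. Then depth R/I^5 = 0, i.e., the maximal graded ideal m is an associated prime of R/I^5. -/

import Mathlib

open MvPolynomial

noncomputable section

/-- The edge ideal of a graph `Γ` on vertex set `σ`, in `k[x_i : i ∈ σ]`. -/
def edgeIdeal (k : Type) [Field k] {σ : Type} (Γ : SimpleGraph σ) :
    Ideal (MvPolynomial σ k) :=
  Ideal.span { m | ∃ i j : σ, Γ.Adj i j ∧ m = X i * X j }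

/-- The maximal graded ideal `(x_i : i ∈ σ)` of `k[x_i : i ∈ σ]`. -/
def maxIdeal (k : Type) [Field k] (σ : Type) : Ideal (MvPolynomial σ k) :=
  Ideal.span (Set.range (X : σ → MvPolynomial σ k))

/-- `depth R/J = 0`, i.e. the maximal graded ideal is an associated prime of `R/J`. -/
def DepthZero (k : Type) [Field k] {σ : Type} (J : Ideal (MvPolynomial σ k)) : Prop :=
  maxIdeal k σ ∈ associatedPrimes (MvPolynomial σ k) (MvPolynomial σ k ⧸ J)

/-- The `i`-th local cohomology of `R/J` with support in the maximal graded ideal. -/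
def locCoh (k : Type) [Field k] {σ : Type} (J : Ideal (MvPolynomial σ k)) (i : ℕ) :=
  (localCohomology (maxIdeal k σ) i).obj (ModuleCat.of _ (MvPolynomial σ k ⧸ J))

/-- `depth R/J`, defined as the least `i` with `H^i_m(R/J) ≠ 0`. -/
def rDepth (k : Type) [Field k] {σ : Type} (J : Ideal (MvPolynomial σ k)) : ℕ :=
  sInf { i | Nontrivial (locCoh k J i) }

/-- A set `U` of vertices is dominating: every vertex outside `U` is adjacent to a
vertex of `U`. -/
def Dominating {σ : Type} (Γ : SimpleGraph σ) (U : Set σ) : Prop :=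
  ∀ v ∉ U, ∃ u ∈ U, Γ.Adj u v

/-- The closed neighborhood `N[v]` of a vertex. -/
def closedNbhd {σ : Type} (Γ : SimpleGraph σ) (v : σ) : Set σ :=
  insert v { u | Γ.Adj v u }

/-- The closed neighborhood `N[C]` of a set of vertices. -/
def closedNbhdSet {σ : Type} (Γ : SimpleGraph σ) (C : Set σ) : Set σ :=
  ⋃ v ∈ C, closedNbhd Γ v

/-- An odd cycle of length `m` (given as an injective map `ZMod m → σ` with consecutive
vertices adjacent) in `Γ`. -/
def IsOddCycle {σ : Type} (Γ : SimpleGraph σ) (m : ℕ) (c : ZMod m → σ) : Prop :=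
  Odd m ∧ 3 ≤ m ∧ Function.Injective c ∧ ∀ i, Γ.Adj (c i) (c (i + 1))

/-- `F` is an independent set of `Γ`. -/
def IsIndep {σ : Type} [Fintype σ] [DecidableEq σ] (Γ : SimpleGraph σ) (F : Finset σ) : Prop :=
  ∀ i ∈ F, ∀ j ∈ F, ¬ Γ.Adj i j

/-- `F` is a maximal independent set of `Γ`. -/
def IsMaxIndep {σ : Type} [Fintype σ] [DecidableEq σ] (Γ : SimpleGraph σ) (F : Finset σ) : Prop :=
  IsIndep Γ F ∧ ∀ G : Finset σ, IsIndep Γ G → F ⊆ G → G = F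

/-- The prime ideal `P_F = (x_i : i ∉ F)`. -/
def PF (k : Type) [Field k] {σ : Type} [Fintype σ] [DecidableEq σ] (F : Finset σ) :
    Ideal (MvPolynomial σ k) :=
  Ideal.span { m | ∃ i ∉ F, m = X i }

/-- The `t`-th symbolic power `I^{(t)} = ⋂_{F maximal independent} P_F^t` of the edge ideal. -/
def symbPow (k : Type) [Field k] {σ : Type} [Fintype σ] [DecidableEq σ]
    (Γ : SimpleGraph σ) (t : ℕ) : Ideal (MvPolynomial σ k) :=
  ⨅ F ∈ { F : Finset σ | IsMaxIndep Γ F }, PF k F ^ t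

/-- The monomial `x^a`. -/
def xPow (k : Type) [Field k] {σ : Type} [Fintype σ] (a : σ → ℕ) : MvPolynomial σ k :=
  ∏ i, X i ^ a i

/-- The localization `R[x_i^{-1} : i ∈ F]`. -/
abbrev locAt (k : Type) [Field k] {σ : Type} (F : Finset σ) :=
  Localization (Submonoid.closure ((fun i => (X i : MvPolynomial σ k)) '' (F : Set σ)))

/-- The degree complex `Δ_a(J) = {F : x^a ∉ J·R[x_i^{-1} : i ∈ F]}` of a monomial ideal `J`. -/
def degComplex (k : Type) [Field k] {σ : Type} [Fintype σ] (J : Ideal (MvPolynomial σ k))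
    (a : σ → ℕ) : Set (Finset σ) :=
  { F | algebraMap (MvPolynomial σ k) (locAt k F) (xPow k a) ∉
      J.map (algebraMap (MvPolynomial σ k) (locAt k F)) }

/-- `F` is a facet (maximal face) of the complex `Δ`. -/
def IsFacet {σ : Type} (Δ : Set (Finset σ)) (F : Finset σ) : Prop :=
  F ∈ Δ ∧ ∀ G ∈ Δ, F ⊆ G → G = F

/-- The complex `Δ` is disconnected: its vertex set splits into two nonempty parts such that
no face meets both. -/
def ComplexDisconnected {σ : Type} (Δ : Set (Finset σ)) : Prop :=
  ∃ A B : Set σ, A.Nonempty ∧ B.Nonempty ∧ Disjoint A B ∧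
    (∀ i, {i} ∈ Δ ↔ i ∈ A ∪ B) ∧
    ∀ F ∈ Δ, ¬ ((∃ i ∈ F, i ∈ A) ∧ (∃ j ∈ F, j ∈ B))

/-- The polynomial ring `R_v = k[x_i : i ≠ v]`. -/
abbrev Rv (k : Type) [Field k] {σ : Type} (v : σ) := MvPolynomial { i : σ // i ≠ v } k

/-- The localization `R[x_v^{-1}]`. -/
abbrev LocAway (k : Type) [Field k] {σ : Type} (v : σ) :=
  Localization.Away (X v : MvPolynomial σ k)

/-- For an ideal `I` of `R`, the ideal `I_v = I·R[x_v^{-1}] ∩ R_v` of `R_v`. -/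
def idealV (k : Type) [Field k] {σ : Type} (I : Ideal (MvPolynomial σ k)) (v : σ) :
    Ideal (Rv k v) :=
  Ideal.comap ((algebraMap (MvPolynomial σ k) (LocAway k v)).comp
      (MvPolynomial.rename (Subtype.val : { i : σ // i ≠ v } → σ)).toRingHom)
    (I.map (algebraMap (MvPolynomial σ k) (LocAway k v)))

/-- The edge ideal of the induced subgraph `Γ_U` in `k[x_i : i ∈ U]`. -/
def edgeIdealOn (k : Type) [Field k] {σ : Type} (Γ : SimpleGraph σ) (U : Set σ) :
    Ideal (MvPolynomial U k) :=
  Ideal.span { m | ∃ i j : U, Γ.Adj (i : σ) (j : σ) ∧ m = X i * X j }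

/-- `Γ` has no isolated vertices. -/
def NoIsolated {σ : Type} (Γ : SimpleGraph σ) : Prop :=
  ∀ v : σ, ∃ u : σ, Γ.Adj v u

/-!
If `w₀, w₁, …, w₂ₛ` are the vertices of an odd closed walk and `v` is adjacent to some `wᵢ`, then
going round the walk from `wᵢ₊₁` to `wᵢ` and on to `v` pairs off `w₀, …, w₂ₛ, v` into `s + 1` edges.
Hence, if the walk dominates `Γ`, the monomial `f = x_{w₀} ⋯ x_{w₂ₛ}` satisfies
`f * x_v ∈ I ^ (s + 1)` for every `v`, while `f ∉ I ^ (s + 1)` because `f` has degree `2 * s + 1`.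
So `f` is a socle element of `R / I ^ (s + 1)`.

It remains to make a given odd closed walk `C` dominating by attaching a walk `x, z, a, b` of length
three, traversed back and forth, which raises the exponent by `3`. Let `W` be the set of vertices
outside `N[C]`. If `W` is empty, any such walk will do. Otherwise connectedness gives some `a ∈ W`
with a neighbour `z ∈ N[C]`, and `z` has a neighbour `x` in `C`. If `W = {a}`, take `b = z`. If `Γᶜ`
is disconnected on `W`, choose `b ∈ W` in a `Γᶜ`-component other than that of `a`: since vertices in
distinct components of `Γᶜ` are adjacent in `Γ`, every vertex of `W` is adjacent to `a` or to `b`.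
-/

section AssociatedPrimes

theorem mem_associatedPrimes_of_smul_eq_zero {R N : Type*} [CommSemiring R] [AddCommMonoid N]
    [Module R N] {M : Ideal R} (hM : M.IsMaximal) {x : N} (hx : x ≠ 0)
    (hMx : ∀ r ∈ M, r • x = 0) : M ∈ associatedPrimes R N := by
  have le_colon : M ≤ Submodule.colon ⊥ {x} := fun r hr ↦ by
    rw [Submodule.mem_colon_singleton, Submodule.mem_bot, hMx r hr]
  refine ⟨hM.isPrime, x, hM.eq_of_le ?_ (le_colon.trans Ideal.le_radical)⟩
  rwa [Ne, Ideal.radical_eq_top, Ideal.eq_top_iff_one, Submodule.mem_colon_singleton,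
    Submodule.mem_bot, one_smul]

variable {k : Type} [Field k] {σ : Type}

theorem maxIdeal_eq_ker_constantCoeff :
    maxIdeal k σ = RingHom.ker (constantCoeff : MvPolynomial σ k →+* k) := by
  ext p
  have mem_iff := mem_pow_idealOfVars_iff' 1 p
  simp only [pow_one, Nat.lt_one_iff, Finsupp.degree_eq_zero_iff, forall_eq] at mem_iff
  rw [RingHom.mem_ker, constantCoeff_eq]
  exact mem_iff

theorem maxIdeal_isMaximal : (maxIdeal k σ).IsMaximal := by
  rw [maxIdeal_eq_ker_constantCoeff]
  exact RingHom.ker_isMaximal_of_surjective _ fun a ↦ ⟨C a, constantCoeff_C σ a⟩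

theorem depthZero_of_mul_X_mem {J : Ideal (MvPolynomial σ k)} {f : MvPolynomial σ k}
    (hf : f ∉ J) (hfX : ∀ v, f * X v ∈ J) : DepthZero k J := by
  have le_colon : maxIdeal k σ ≤ J.colon {f} := by
    refine Ideal.span_le.2 (Set.range_subset_iff.2 fun v ↦ ?_)
    rw [SetLike.mem_coe, Submodule.mem_colon_singleton, smul_eq_mul, mul_comm]
    exact hfX v
  refine mem_associatedPrimes_of_smul_eq_zero maxIdeal_isMaximal
    (mt Ideal.Quotient.eq_zero_iff_mem.1 hf) fun r hr ↦ ?_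
  exact Ideal.Quotient.eq_zero_iff_mem.2 (Submodule.mem_colon_singleton.1 (le_colon hr))

end AssociatedPrimes

section Graph

open SimpleGraph

variable {V : Type*} {G : SimpleGraph V}

theorem exists_closed_walk_length_add_two_mul {u x b : V} (c : G.Walk u u)
    (hx : x ∈ c.support) (q : G.Walk x b) :
    ∃ c' : G.Walk x x, c'.length = c.length + 2 * q.length ∧
      ∀ v, v ∈ c.support ∨ v ∈ q.support → v ∈ c'.support := by
  classical
  refine ⟨(c.rotate x hx).append (q.append q.reverse), ?_, fun v hv ↦ ?_⟩
  · simp only [Walk.length_append, Walk.length_rotate, Walk.length_reverse]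
    ring
  · simpa [Walk.mem_support_append_iff] using hv

theorem exists_compl_adj_forall_compl_adj_or_of_not_connected (hG : ¬ G.Connected) (a : V) :
    ∃ b, Gᶜ.Adj a b ∧ ∀ v, Gᶜ.Adj a v ∨ Gᶜ.Adj b v := by
  obtain ⟨b, hab⟩ : ∃ b, ¬ G.Reachable a b := by
    by_contra! h
    exact hG (connected_iff_exists_forall_reachable G |>.2 ⟨a, h⟩)
  refine ⟨b, (G.reachable_or_compl_adj a b).resolve_left hab, fun v ↦ ?_⟩
  refine (G.reachable_or_compl_adj a v).symm.imp_right fun hav ↦ ?_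
  exact (G.reachable_or_compl_adj b v).resolve_left fun hbv ↦ hab (hav.trans hbv.symm)

theorem exists_adj_forall_mem_adj_or_adj_of_not_connected {W : Set V}
    (hW : ¬ (Gᶜ.induce W).Connected) {a : V} (ha : a ∈ W) :
    ∃ b, G.Adj a b ∧ ∀ v ∈ W, G.Adj a v ∨ G.Adj b v := by
  have adj_of_compl_adj {x y : W} (h : (Gᶜ.induce W)ᶜ.Adj x y) : G.Adj x y := by
    have ne : (x : V) ≠ y := fun hxy ↦ h.ne (Subtype.ext hxy)
    exact not_not.1 fun hxy ↦ ((compl_adj _ _ _).1 h).2 ⟨ne, hxy⟩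
  obtain ⟨b, hab, hdom⟩ := exists_compl_adj_forall_compl_adj_or_of_not_connected hW ⟨a, ha⟩
  exact ⟨b, adj_of_compl_adj hab, fun v hv ↦
    (hdom ⟨v, hv⟩).imp adj_of_compl_adj adj_of_compl_adj⟩

theorem exists_adj_forall_mem_eq_or_adj_or_adj {W : Set V}
    (hW : W.Subsingleton ∨ ¬ (Gᶜ.induce W).Connected) {a z : V} (ha : a ∈ W)
    (haz : G.Adj a z) : ∃ b, G.Adj a b ∧ ∀ v ∈ W, v = a ∨ G.Adj a v ∨ G.Adj b v := by
  obtain hsub | hdisc := hW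
  · exact ⟨z, haz, fun v hv ↦ .inl (hsub hv ha)⟩
  · obtain ⟨b, hab, hdom⟩ := exists_adj_forall_mem_adj_or_adj_of_not_connected hdisc ha
    exact ⟨b, hab, fun v hv ↦ .inr (hdom v hv)⟩

theorem exists_adj_mem_notMem (hG : G.Preconnected) {W : Set V} {w u : V} (hw : w ∈ W)
    (hu : u ∉ W) : ∃ a ∈ W, ∃ z ∉ W, G.Adj a z := by
  obtain ⟨p⟩ := hG w u
  obtain ⟨d, -, hfst, hsnd⟩ := p.exists_boundary_dart W hw hu
  exact ⟨d.fst, hfst, d.snd, hsnd, d.adj⟩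

theorem setOf_mem_support_triangle {u v w : V} (huv : G.Adj u v) (hvw : G.Adj v w)
    (hwu : G.Adj w u) :
    {x | x ∈ (Walk.cons huv (.cons hvw hwu.toWalk)).support} = {u, v, w} := by
  ext x
  simp only [Walk.support_cons, Walk.support_nil, Set.mem_ofPred_eq, List.mem_cons,
    List.not_mem_nil, Set.mem_insert_iff, Set.mem_singleton_iff]
  tauto

end Graph

section EdgeIdeal

open SimpleGraph

variable {k : Type} [Field k] {σ : Type} {Γ : SimpleGraph σ}

theorem X_mul_X_mem_edgeIdeal {i j : σ} (h : Γ.Adj i j) : X i * X j ∈ edgeIdeal k Γ :=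
  Ideal.subset_span ⟨i, j, h, rfl⟩

theorem edgeIdeal_le_idealOfVars_sq : edgeIdeal k Γ ≤ idealOfVars σ k ^ 2 := by
  refine Ideal.span_le.2 ?_
  rintro _ ⟨i, j, -, rfl⟩
  rw [sq]
  exact Ideal.mul_mem_mul (Ideal.subset_span ⟨i, rfl⟩) (Ideal.subset_span ⟨j, rfl⟩)

theorem two_mul_le_totalDegree_of_mem_edgeIdeal_pow {t : ℕ} {f : MvPolynomial σ k}
    (hf : f ∈ edgeIdeal k Γ ^ t) (hf0 : f ≠ 0) : 2 * t ≤ f.totalDegree := by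
  have hf_vars : f ∈ idealOfVars σ k ^ (2 * t) := by
    rw [pow_mul]
    exact Ideal.pow_right_mono edgeIdeal_le_idealOfVars_sq t hf
  obtain ⟨m, hm⟩ := support_nonempty.2 hf0
  exact ((mem_pow_idealOfVars_iff _ f).1 hf_vars m hm).trans (le_totalDegree hm)

theorem prod_map_X_notMem_edgeIdeal_pow {t : ℕ} {l : List σ} (hl : l.length < 2 * t) :
    (l.map X).prod ∉ edgeIdeal k Γ ^ t := fun hmem ↦ by
  have prod_ne_zero : (l.map (X : σ → MvPolynomial σ k)).prod ≠ 0 := by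
    simp [X_ne_zero]
  have totalDegree_le : (l.map (X : σ → MvPolynomial σ k)).prod.totalDegree ≤ l.length := by
    refine (totalDegree_list_prod _).trans_eq ?_
    simp [Function.comp_def]
  have := two_mul_le_totalDegree_of_mem_edgeIdeal_pow hmem prod_ne_zero
  lia

theorem prod_map_X_support_mem_edgeIdeal_pow {u v : σ} (p : Γ.Walk u v) {s : ℕ}
    (hp : p.length = 2 * s + 1) : (p.support.map X).prod ∈ edgeIdeal k Γ ^ (s + 1) := by
  induction s generalizing u with
  | zero =>
    match p, hp with
    | .cons h .nil, _ => simpa using X_mul_X_mem_edgeIdeal h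
  | succ s ih =>
    match p, hp with
    | .cons h (.cons _ q), hp =>
      simp only [Walk.length_cons] at hp
      rw [Walk.support_cons, Walk.support_cons, List.map_cons, List.map_cons, List.prod_cons,
        List.prod_cons, ← mul_assoc, pow_succ']
      exact Ideal.mul_mem_mul (X_mul_X_mem_edgeIdeal h) (ih q (by lia))

theorem prod_map_X_support_tail_mul_X_mem_edgeIdeal_pow {u v w : σ} (c : Γ.Walk u u) {s : ℕ}
    (hc : c.length = 2 * s + 1) (hw : w ∈ c.support) (hwv : Γ.Adj w v) :
    (c.support.tail.map X).prod * X v ∈ edgeIdeal k Γ ^ (s + 1) := by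
  classical
  set r := c.rotate w hw
  have length_r : r.length = 2 * s + 1 := (c.length_rotate w hw).trans hc
  have hnil : ¬ r.Nil := by rw [Walk.not_nil_iff_lt_length]; lia
  have prod_eq : (c.support.tail.map X).prod * X v =
      (((r.tail.concat hwv).support.map X).prod : MvPolynomial σ k) := by
    rw [Walk.support_concat, Walk.support_tail_of_not_nil _ hnil,
      ← ((c.support_rotate w hw).perm.map X).prod_eq]
    simp [r]
  have length_concat : (r.tail.concat hwv).length = 2 * s + 1 := by
    rw [Walk.length_concat, Walk.length_tail_add_one hnil, length_r]
  rw [prod_eq]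
  exact prod_map_X_support_mem_edgeIdeal_pow _ length_concat

end EdgeIdeal

section DominatingWalk

open SimpleGraph

variable {σ : Type} {Γ : SimpleGraph σ}

theorem mem_closedNbhdSet_iff {C : Set σ} {v : σ} :
    v ∈ closedNbhdSet Γ C ↔ v ∈ C ∨ ∃ u ∈ C, Γ.Adj u v := by
  simp [closedNbhdSet, closedNbhd, and_or_left, exists_or]

theorem Dominating.mono {U U' : Set σ} (hU : Dominating Γ U) (hUU' : U ⊆ U') :
    Dominating Γ U' := fun v hv ↦
  (hU v fun hvU ↦ hv (hUU' hvU)).imp fun _ ↦ And.imp_left fun h ↦ hUU' h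

theorem Dominating.exists_adj_of_closed_walk {u : σ} {c : Γ.Walk u u}
    (hdom : Dominating Γ {w | w ∈ c.support}) (hc : ¬ c.Nil) (v : σ) :
    ∃ w ∈ c.support, Γ.Adj w v := by
  classical
  by_cases hv : v ∈ c.support
  · have snd_mem : (c.rotate v hv).snd ∈ (c.rotate v hv).support :=
      Walk.getVert_mem_support _ 1
    have adj_snd := Walk.adj_snd (mt (Walk.nil_rotate hv).1 hc)
    exact ⟨_, (c.mem_support_rotate_iff v hv).1 snd_mem, adj_snd.symm⟩
  · exact hdom v hv

theorem depthZero_of_dominating_odd_closed_walk (k : Type) [Field k] {u : σ} (c : Γ.Walk u u)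
    {s : ℕ} (hc : c.length = 2 * s + 1) (hdom : Dominating Γ {w | w ∈ c.support}) :
    DepthZero k (edgeIdeal k Γ ^ (s + 1)) := by
  have hnil : ¬ c.Nil := by rw [Walk.not_nil_iff_lt_length]; lia
  have length_support_tail : c.support.tail.length = 2 * s + 1 := by simp [hc]
  refine depthZero_of_mul_X_mem (f := (c.support.tail.map X).prod)
    (prod_map_X_notMem_edgeIdeal_pow (by lia)) fun v ↦ ?_
  obtain ⟨w, hw, hwv⟩ := hdom.exists_adj_of_closed_walk hnil v
  exact prod_map_X_support_tail_mul_X_mem_edgeIdeal_pow c hc hw hwv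

end DominatingWalk

section DominatingTail

variable {σ : Type} {Γ : SimpleGraph σ}

theorem exists_adj_adj_notMem_closedNbhdSet (hconn : Γ.Preconnected) {C : Set σ}
    (hne : C.Nonempty) (hne' : (closedNbhdSet Γ C)ᶜ.Nonempty) :
    ∃ x ∈ C, ∃ z, ∃ a ∈ (closedNbhdSet Γ C)ᶜ, Γ.Adj x z ∧ Γ.Adj z a := by
  obtain ⟨u, hu⟩ := hne
  obtain ⟨w, hw⟩ := hne'
  obtain ⟨a, ha, z, hz, haz⟩ :=
    exists_adj_mem_notMem hconn hw fun h ↦ h (mem_closedNbhdSet_iff.2 (.inl hu))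
  have hzC : z ∉ C := fun h ↦ ha (mem_closedNbhdSet_iff.2 (.inr ⟨z, h, haz.symm⟩))
  obtain ⟨x, hx, hxz⟩ := (mem_closedNbhdSet_iff.1 (not_not.1 hz)).resolve_left hzC
  exact ⟨x, hx, z, a, ha, hxz, haz.symm⟩

theorem dominating_of_forall_notMem_closedNbhdSet {C U : Set σ} (hCU : C ⊆ U)
    (hU : ∀ v ∉ closedNbhdSet Γ C, v ∉ U → ∃ u ∈ U, Γ.Adj u v) : Dominating Γ U := fun v hv ↦ by
  by_cases hvC : v ∈ closedNbhdSet Γ C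
  · obtain ⟨x, hx, hxv⟩ := (mem_closedNbhdSet_iff.1 hvC).resolve_left fun h ↦ hv (hCU h)
    exact ⟨x, hCU hx, hxv⟩
  · exact hU v hvC hv

theorem exists_walk_length_three_dominating_union (hconn : Γ.Preconnected) {C : Set σ} {u w : σ}
    (hu : u ∈ C) (huw : Γ.Adj u w)
    (hC : (closedNbhdSet Γ C)ᶜ.Subsingleton ∨ ¬ (Γᶜ.induce (closedNbhdSet Γ C)ᶜ).Connected) :
    ∃ x ∈ C, ∃ b, ∃ q : Γ.Walk x b, q.length = 3 ∧ Dominating Γ (C ∪ {v | v ∈ q.support}) := by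
  obtain hempty | hne := (closedNbhdSet Γ C)ᶜ.eq_empty_or_nonempty
  · refine ⟨u, hu, w, .cons huw (.cons huw.symm huw.toWalk), rfl,
      dominating_of_forall_notMem_closedNbhdSet Set.subset_union_left fun v hv ↦ ?_⟩
    exact absurd (Set.compl_empty_iff.1 hempty ▸ Set.mem_univ v) hv
  · obtain ⟨x, hx, z, a, ha, hxz, hza⟩ :=
      exists_adj_adj_notMem_closedNbhdSet hconn ⟨u, hu⟩ hne
    obtain ⟨b, hab, hdom⟩ := exists_adj_forall_mem_eq_or_adj_or_adj hC ha hza.symm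
    refine ⟨x, hx, b, .cons hxz (.cons hza hab.toWalk), rfl,
      dominating_of_forall_notMem_closedNbhdSet Set.subset_union_left fun v hv hvU ↦ ?_⟩
    obtain rfl | hav | hbv := hdom v hv
    · exact absurd (.inr (by simp)) hvU
    · exact ⟨a, .inr (by simp), hav⟩
    · exact ⟨b, .inr (by simp), hbv⟩

end DominatingTail

theorem stmt18_general (k : Type) [Field k] {σ : Type} {Γ : SimpleGraph σ} (hconn : Γ.Connected)
    {u : σ} (c : Γ.Walk u u) {s : ℕ} (hc : c.length = 2 * s + 1)
    (hC : (closedNbhdSet Γ {v | v ∈ c.support})ᶜ.Subsingleton ∨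
      ¬ (Γᶜ.induce (closedNbhdSet Γ {v | v ∈ c.support})ᶜ).Connected) :
    DepthZero k (edgeIdeal k Γ ^ (s + 4)) := by
  have hnil : ¬ c.Nil := by rw [SimpleGraph.Walk.not_nil_iff_lt_length]; lia
  obtain ⟨x, hx, b, q, hq, hdom⟩ := exists_walk_length_three_dominating_union
    hconn.preconnected c.start_mem_support (SimpleGraph.Walk.adj_snd hnil) hC
  obtain ⟨c', hc', hsupp⟩ := exists_closed_walk_length_add_two_mul c hx q
  exact depthZero_of_dominating_odd_closed_walk k c' (s := s + 3) (by lia) (hdom.mono hsupp)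

/-- Let `Γ` be a connected non-bipartite graph with a triangle `C`
such that either `V ∖ N[C]` has at most one vertex or the induced subgraph of the
complement graph `Γᶜ` on `V ∖ N[C]` is disconnected. Then `depth R/I^5 = 0`, i.e. the
maximal graded ideal is an associated prime of `R/I^5`. -/
theorem stmt18 (k : Type) [Field k] (n : ℕ) (Γ : SimpleGraph (Fin n))
    (hiso : NoIsolated Γ) (hconn : Γ.Connected) (hnb : ¬ Γ.Colorable 2)
    (u₁ u₂ u₃ : Fin n) (h12 : Γ.Adj u₁ u₂) (h13 : Γ.Adj u₁ u₃) (h23 : Γ.Adj u₂ u₃)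
    (hC : (closedNbhdSet Γ ({u₁, u₂, u₃} : Set (Fin n)))ᶜ.Subsingleton ∨
      ¬ ((Γᶜ).induce ((closedNbhdSet Γ ({u₁, u₂, u₃} : Set (Fin n)))ᶜ :
        Set (Fin n))).Connected) :
    DepthZero k ((edgeIdeal k Γ) ^ 5) := by
  rw [← setOf_mem_support_triangle h12 h23 h13.symm] at hC
  exact stmt18_general k hconn _ (s := 1) rfl hC

end
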